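/- Let λ and λ* be reals with λ ≥ λ* > 0 and let k be a positive integer. Suppose (i) there exists a rooted tour cover (with any number of tours) whose maximum tour weight is at most λ*, and (ii) F is a forest in the complete graph G on V whose vertex set covers V, such that every edge of F has weight at most λ, exactly n_LT trees of F have weight strictly less than λ*, every other tree of F has weight at least λ*, and the total weight of the trees of weight at least λ* is at most (k − n_LT)·λ*. Then there exists a rooted tour cover with at most k tours whose maximum tour weight is at most 4λ + λ*. -/

import Mathlib

/-- The weight of a walk, given as the list of its vertices in order: the sum
of the weights of its consecutive pairs (with multiplicity). -/
def walkWeight {V : Type} (w : V → V → ℝ) (p : List V) : ℝ :=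
  ((p.zip p.tail).map fun q => w q.1 q.2).sum

/-- `p` is a closed walk (in the complete graph) starting and ending at `d`. -/
def IsClosedWalkAt {V : Type} (p : List V) (d : V) : Prop :=
  p ≠ [] ∧ p.head? = some d ∧ p.getLast? = some d ∧ p.Chain' (· ≠ ·)

/-- The total edge weight of a subgraph of the complete graph on `V`. -/
noncomputable def subWeight {V : Type} [Fintype V] (wE : Sym2 V → ℝ)
    (H : (⊤ : SimpleGraph V).Subgraph) : ℝ :=
  ∑ e ∈ H.edgeSet.toFinite.toFinset, wE e

/-!
Every vertex lies on a closed walk of weight at most `λ*` through a depot, so it is within `λ* / 2`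
of a depot. A tree of weight `W` is cut into at most `max 1 (W / λ*)` subtrees of weight at most
`λ + λ*`: as long as the tree is heavier than that, its root part sheds a subtree, sharing one
vertex with it, whose weight is between `λ*` and `λ + λ*`. Each subtree shed accounts for `λ*` of
the weight, and so does the last remainder even if it is lighter than `λ*`, because the tree it was
cut from is heavier than `λ + λ* ≥ 2 λ*`. Doubling a subtree and joining its root to the nearest
depot gives a tour of weight at most `2 (λ + λ*) + λ* ≤ 4 λ + λ*`.
-/

section Walk

variable {V : Type} {w : V → V → ℝ}

lemma walkWeight_singleton (w : V → V → ℝ) (a : V) : walkWeight w [a] = 0 := by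
  simp [walkWeight]

lemma walkWeight_cons_cons (w : V → V → ℝ) (a b : V) (p : List V) :
    walkWeight w (a :: b :: p) = w a b + walkWeight w (b :: p) := rfl

lemma walkWeight_append_cons (w : V → V → ℝ) (p q : List V) (a : V) :
    walkWeight w (p ++ a :: q) = walkWeight w (p ++ [a]) + walkWeight w (a :: q) := by
  induction p with
  | nil => simp [walkWeight_singleton]
  | cons b p ih =>
    cases p with
    | nil => simp [walkWeight_cons_cons, walkWeight_singleton]
    | cons c p => simpa [walkWeight_cons_cons, add_assoc] using ih

lemma walkWeight_append {p q : List V} {a b : V} (hp : p.getLast? = some a)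
    (hq : q.head? = some b) :
    walkWeight w (p ++ q) = walkWeight w p + w a b + walkWeight w q := by
  obtain ⟨p, rfl⟩ := List.getLast?_eq_some_iff.1 hp
  obtain ⟨q, rfl⟩ := List.head?_eq_some_iff.1 hq
  rw [List.append_assoc, List.singleton_append, walkWeight_append_cons, walkWeight_cons_cons,
    add_assoc]

lemma le_walkWeight (hzero : ∀ v, w v v = 0) (htri : ∀ u v x, w u x ≤ w u v + w v x)
    {p : List V} {a b : V} (ha : p.head? = some a) (hb : p.getLast? = some b) :
    w a b ≤ walkWeight w p := by
  obtain ⟨p, rfl⟩ := List.head?_eq_some_iff.1 ha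
  induction p generalizing a with
  | nil =>
    obtain rfl : a = b := by simpa using hb
    rw [hzero, walkWeight_singleton]
  | cons c p ih =>
    have hcb : w c b ≤ walkWeight w (c :: p) := ih rfl (by simpa using hb)
    rw [walkWeight_cons_cons]
    linarith [htri a c b]

lemma IsClosedWalkAt.two_mul_le_walkWeight (hzero : ∀ v, w v v = 0)
    (hsymm : ∀ u v, w u v = w v u) (htri : ∀ u v x, w u x ≤ w u v + w v x)
    {p : List V} {d v : V} (hp : IsClosedWalkAt p d) (hv : v ∈ p) :
    2 * w d v ≤ walkWeight w p := by
  obtain ⟨-, hhead, hlast, -⟩ := hp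
  obtain ⟨p, q, rfl⟩ := List.append_of_mem hv
  have hout : w d v ≤ walkWeight w (p ++ [v]) :=
    le_walkWeight hzero htri (by cases p <;> simpa using hhead) (by simp)
  have hback : w v d ≤ walkWeight w (v :: q) :=
    le_walkWeight hzero htri rfl (by simpa using hlast)
  rw [walkWeight_append_cons]
  linarith [hsymm d v]

lemma exists_isChain_ne_walkWeight_eq (hzero : ∀ v, w v v = 0) (p : List V) :
    ∃ p' : List V, p'.head? = p.head? ∧ p'.getLast? = p.getLast? ∧ (∀ v, v ∈ p' ↔ v ∈ p) ∧
      walkWeight w p' = walkWeight w p ∧ p'.IsChain (· ≠ ·) := by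
  induction p with
  | nil => exact ⟨[], by simp⟩
  | cons a p ih =>
    obtain ⟨p', hhead, hlast, hmem, hweight, hchain⟩ := ih
    cases p with
    | nil => exact ⟨[a], by simp⟩
    | cons b p =>
      obtain ⟨p', rfl⟩ := List.head?_eq_some_iff.1 hhead
      by_cases hab : a = b
      · subst hab
        exact ⟨a :: p', rfl, by simpa using hlast, by simpa using hmem,
          by rw [hweight, walkWeight_cons_cons, hzero, zero_add], hchain⟩
      · exact ⟨a :: b :: p', rfl, by simpa using hlast,
          fun v ↦ by rw [List.mem_cons, hmem, ← List.mem_cons],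
          by rw [walkWeight_cons_cons, walkWeight_cons_cons, hweight],
          List.isChain_cons_cons.2 ⟨hab, hchain⟩⟩

end Walk

/-- Finite rooted trees with vertices labelled by `V`, used for the trees of the forest and the
pieces they are cut into: `attach t s` adds to `t` an edge from its root to the root of `s`. Labels
may repeat. -/
inductive OrderedTree (V : Type*)
  | single (v : V) : OrderedTree V
  | attach (t s : OrderedTree V) : OrderedTree V

namespace OrderedTree

section Basic

variable {V : Type*}

/-- The root of a tree. -/
def root : OrderedTree V → V
  | single v => v
  | attach t _ => t.root

/-- The edges of a tree, with multiplicity because labels may repeat. -/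
def edges : OrderedTree V → Multiset (Sym2 V)
  | single _ => 0
  | attach t s => {s(t.root, s.root)} + (t.edges + s.edges)

/-- The total weight of the edges of a tree. -/
def weight (c : Sym2 V → ℝ) (t : OrderedTree V) : ℝ :=
  (t.edges.map c).sum

/-- The closed walk from the root that traverses every edge of the tree twice; its members are
exactly the vertices of the tree. -/
def tour : OrderedTree V → List V
  | single v => [v]
  | attach t s => t.tour ++ (s.tour ++ [t.root])

lemma weight_single (c : Sym2 V → ℝ) (v : V) : (single v).weight c = 0 := by
  simp [weight, edges]

lemma weight_attach (c : Sym2 V → ℝ) (t s : OrderedTree V) :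
    (attach t s).weight c = c s(t.root, s.root) + (t.weight c + s.weight c) := by
  simp [weight, edges]

lemma weight_add_weight_of_edges_add_edges {t A B : OrderedTree V}
    (h : A.edges + B.edges = t.edges) (c : Sym2 V → ℝ) :
    A.weight c + B.weight c = t.weight c := by
  simp [weight, ← h]

lemma head?_tour (t : OrderedTree V) : t.tour.head? = some t.root := by
  induction t with
  | single v => rfl
  | attach t _ iht _ => simp [tour, root, iht]

lemma getLast?_tour (t : OrderedTree V) : t.tour.getLast? = some t.root := by
  cases t <;> simp [tour, root]

lemma root_mem_tour (t : OrderedTree V) : t.root ∈ t.tour :=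
  List.mem_of_mem_head? t.head?_tour

lemma mem_tour_single {u v : V} : u ∈ (single v).tour ↔ u = v :=
  List.mem_singleton

lemma mem_tour_attach {t s : OrderedTree V} {v : V} :
    v ∈ (attach t s).tour ↔ v ∈ t.tour ∨ v ∈ s.tour := by
  have := t.root_mem_tour
  simp only [tour, List.mem_append, List.mem_singleton]
  grind

lemma mem_tour_of_mem_edges {t : OrderedTree V} {e : Sym2 V} {v : V} (he : e ∈ t.edges)
    (hv : v ∈ e) : v ∈ t.tour := by
  induction t with
  | single u => simp [edges] at he
  | attach t s iht ihs =>
    rw [mem_tour_attach]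
    simp only [edges, Multiset.mem_add, Multiset.mem_singleton] at he
    rcases he with rfl | he | he
    · rcases Sym2.mem_iff.1 hv with rfl | rfl
      · exact .inl t.root_mem_tour
      · exact .inr s.root_mem_tour
    · exact .inl (iht he)
    · exact .inr (ihs he)

lemma exists_edges_eq_singleton_add {t : OrderedTree V} {u : V} (hu : u ∈ t.tour) (x : V) :
    ∃ t' : OrderedTree V, t'.root = t.root ∧ t'.edges = {s(u, x)} + t.edges ∧
      ∀ v, v ∈ t'.tour ↔ v = x ∨ v ∈ t.tour := by
  induction t with
  | single y =>
    obtain rfl := mem_tour_single.1 hu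
    exact ⟨attach (single u) (single x), rfl, rfl,
      fun v ↦ by simp [mem_tour_attach, mem_tour_single, or_comm]⟩
  | attach t s iht ihs =>
    rcases mem_tour_attach.1 hu with hu | hu
    · obtain ⟨t', hroot, hedges, hmem⟩ := iht hu
      refine ⟨attach t' s, hroot, ?_, fun v ↦ by simp only [mem_tour_attach, hmem, or_assoc]⟩
      simp only [edges, hroot, hedges]
      abel
    · obtain ⟨s', hroot, hedges, hmem⟩ := ihs hu
      refine ⟨attach t s', rfl, ?_,
        fun v ↦ by simp only [mem_tour_attach, hmem, or_left_comm]⟩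
      simp only [edges, hroot, hedges]
      abel

end Basic

section Split

variable {V : Type*} {c : Sym2 V → ℝ} {lam a : ℝ}

lemma exists_edges_add_edges_eq (ha : 0 < a) (hlam : a ≤ lam) {t : OrderedTree V}
    (hedge : ∀ e ∈ t.edges, c e ≤ lam) (ht : a ≤ t.weight c) :
    ∃ A B : OrderedTree V, B.root = t.root ∧ A.edges + B.edges = t.edges ∧
      (∀ v ∈ t.tour, v ∈ A.tour ∨ v ∈ B.tour) ∧ a ≤ A.weight c ∧ A.weight c ≤ lam + a := by
  induction t with
  | single v => linarith [weight_single c v]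
  | attach t s iht ihs =>
    have hc : c s(t.root, s.root) ≤ lam := hedge _ (by simp [edges])
    rw [weight_attach] at ht
    by_cases hs : a ≤ s.weight c
    · obtain ⟨A, B, hroot, hedges, hmem, hA⟩ :=
        ihs (fun e he ↦ hedge e (by simp [edges, he])) hs
      refine ⟨A, attach t B, rfl, ?_, ?_, hA⟩
      · simp only [edges, hroot, ← hedges]
        abel
      · grind [mem_tour_attach]
    by_cases ht' : a ≤ t.weight c
    · obtain ⟨A, B, hroot, hedges, hmem, hA⟩ :=
        iht (fun e he ↦ hedge e (by simp [edges, he])) ht'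
      refine ⟨A, attach B s, hroot, ?_, ?_, hA⟩
      · simp only [edges, hroot, ← hedges]
        abel
      · grind [mem_tour_attach]
    by_cases hsc : a ≤ c s(t.root, s.root) + s.weight c
    · refine ⟨attach (single t.root) s, t, rfl, ?_, ?_, ?_⟩
      · simp only [edges, root]
        abel
      · grind [mem_tour_attach]
      · rw [weight_attach, weight_single, root]
        constructor <;> linarith
    · refine ⟨attach t s, single t.root, rfl, by simp [edges], fun v hv ↦ .inl hv, ?_⟩
      rw [weight_attach]
      constructor <;> linarith

lemma exists_list_cover (ha : 0 < a) (hlam : a ≤ lam) (t : OrderedTree V)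
    (hedge : ∀ e ∈ t.edges, c e ≤ lam) :
    ∃ Q : List (OrderedTree V), (∀ A ∈ Q, A.weight c ≤ lam + a) ∧
      (∀ v ∈ t.tour, ∃ A ∈ Q, v ∈ A.tour) ∧ Q.length * a ≤ max a (t.weight c) := by
  induction hn : t.edges.card using Nat.strong_induction_on generalizing t with
  | _ n ih =>
  by_cases ht : t.weight c ≤ lam + a
  · exact ⟨[t], by simpa using ht, by simp, by simp⟩
  obtain ⟨A, B, -, hedges, hmem, haA, hA⟩ :=
    exists_edges_add_edges_eq ha hlam hedge (by linarith)
  have hAB : A.weight c + B.weight c = t.weight c := weight_add_weight_of_edges_add_edges hedges c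
  have hcard : B.edges.card < n := by
    have hne : A.edges ≠ 0 := fun h ↦ ha.not_ge (by simpa [weight, h] using haA)
    rw [← hn, ← hedges, Multiset.card_add]
    exact Nat.lt_add_of_pos_left (Multiset.card_pos.2 hne)
  obtain ⟨Q, hQ, hQmem, hQlen⟩ := ih _ hcard B (fun e he ↦ hedge e (by simp [← hedges, he])) rfl
  refine ⟨A :: Q, List.forall_mem_cons.2 ⟨hA, hQ⟩, fun v hv ↦ ?_, le_max_of_le_right ?_⟩
  · simpa using (hmem v hv).imp_right (hQmem v)
  · have hmax : max a (B.weight c) ≤ t.weight c - a := max_le (by linarith) (by linarith)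
    push_cast [List.length_cons]
    linarith

end Split

section Tour

variable {V : Type} {w : V → V → ℝ}

lemma walkWeight_tour (hsymm : ∀ u v, w u v = w v u) (t : OrderedTree V) :
    walkWeight w t.tour = 2 * t.weight (Sym2.lift ⟨w, hsymm⟩) := by
  induction t with
  | single v => simp [tour, walkWeight_singleton, weight_single]
  | attach t s iht ihs =>
    rw [tour, walkWeight_append t.getLast?_tour (b := s.root) (by simp [head?_tour]),
      walkWeight_append s.getLast?_tour rfl, walkWeight_singleton, iht, ihs, weight_attach,
      Sym2.lift_mk, hsymm s.root]
    ring

lemma exists_isClosedWalkAt (hzero : ∀ v, w v v = 0) (hsymm : ∀ u v, w u v = w v u)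
    (t : OrderedTree V) (d : V) :
    ∃ p : List V, IsClosedWalkAt p d ∧ (∀ v ∈ t.tour, v ∈ p) ∧
      walkWeight w p = 2 * t.weight (Sym2.lift ⟨w, hsymm⟩) + 2 * w d t.root := by
  obtain ⟨p, hhead, hlast, hmem, hweight, hchain⟩ :=
    exists_isChain_ne_walkWeight_eq hzero ([d] ++ (t.tour ++ [d]))
  refine ⟨p, ⟨?_, hhead, ?_, hchain⟩, fun v hv ↦ (hmem v).2 (by simp [hv]), ?_⟩
  · rintro rfl
    simp at hhead
  · rw [hlast, ← List.append_assoc, List.getLast?_concat]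
  · rw [hweight, walkWeight_append (a := d) (b := t.root) rfl (by simp [head?_tour]),
      walkWeight_append t.getLast?_tour rfl, walkWeight_singleton w d,
      walkWeight_tour hsymm, hsymm t.root]
    ring

end Tour

end OrderedTree

section Subgraph

lemma connected_subgraph_induction {V : Type*} {G : SimpleGraph V} {H : G.Subgraph}
    (hH : H.Connected) (hfin : H.verts.Finite) {P : Set V → Prop}
    (hsingleton : ∀ r ∈ H.verts, P {r})
    (hinsert : ∀ S u x, u ∈ S → x ∉ S → H.Adj u x → P S → P (insert x S)) : P H.verts := by
  obtain ⟨r, hr⟩ := hH.nonempty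
  obtain ⟨S, -, ⟨hSH, hPS, hrS⟩, hmax⟩ :=
    (hfin.finite_subsets.subset fun S hS ↦ hS.1 :
      {S | S ⊆ H.verts ∧ P S ∧ r ∈ S}.Finite).exists_le_maximal
      ⟨Set.singleton_subset_iff.2 hr, hsingleton r hr, rfl⟩
  suffices H.verts ⊆ S from hSH.antisymm this ▸ hPS
  intro z hz
  by_contra hzS
  obtain ⟨p⟩ := hH.coe.preconnected ⟨r, hr⟩ ⟨z, hz⟩
  obtain ⟨d, -, hu, hx⟩ := p.exists_boundary_dart {y | y.1 ∈ S} hrS hzS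
  exact hx (hmax ⟨Set.insert_subset d.snd.2 hSH, hinsert S _ _ hu hx d.adj hPS, .inr hrS⟩
    (Set.subset_insert _ S) (Set.mem_insert _ S))

lemma exists_spanning_orderedTree {V : Type*} {G : SimpleGraph V} {H : G.Subgraph}
    (hH : H.Connected) (hfin : H.verts.Finite) :
    ∃ t : OrderedTree V, (∀ v, v ∈ t.tour ↔ v ∈ H.verts) ∧ t.edges.Nodup ∧
      ∀ e ∈ t.edges, e ∈ H.edgeSet := by
  refine connected_subgraph_induction hH hfin
    (P := fun S ↦ ∃ t : OrderedTree V, (∀ v, v ∈ t.tour ↔ v ∈ S) ∧ t.edges.Nodup ∧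
      ∀ e ∈ t.edges, e ∈ H.edgeSet) (fun r _ ↦ ?_) ?_
  · exact ⟨.single r, fun v ↦ OrderedTree.mem_tour_single, by simp [OrderedTree.edges],
      by simp [OrderedTree.edges]⟩
  · rintro S u x hu hx hadj ⟨t, hmem, hnodup, hsub⟩
    obtain ⟨t', -, hedges, hmem'⟩ :=
      OrderedTree.exists_edges_eq_singleton_add ((hmem u).2 hu) x
    have hnew : s(u, x) ∉ t.edges := fun h ↦
      hx ((hmem x).1 (OrderedTree.mem_tour_of_mem_edges h (Sym2.mem_mk_right u x)))
    rw [Multiset.singleton_add] at hedges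
    exact ⟨t', fun v ↦ by rw [hmem', hmem, Set.mem_insert_iff],
      hedges ▸ Multiset.nodup_cons.2 ⟨hnew, hnodup⟩,
      hedges ▸ Multiset.forall_mem_cons.2 ⟨hadj, hsub⟩⟩

variable {V : Type} [Fintype V] {c : Sym2 V → ℝ} {H : (⊤ : SimpleGraph V).Subgraph}

lemma OrderedTree.weight_le_subWeight (hc : ∀ e, 0 ≤ c e) {t : OrderedTree V}
    (hnodup : t.edges.Nodup) (hsub : ∀ e ∈ t.edges, e ∈ H.edgeSet) :
    t.weight c ≤ subWeight c H :=
  Finset.sum_le_sum_of_subset_of_nonneg (s := ⟨t.edges, hnodup⟩)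
    (fun e he ↦ (Set.Finite.mem_toFinset _).2 (hsub e he)) fun e _ _ ↦ hc e

lemma exists_list_orderedTree_cover {lam a : ℝ} (ha : 0 < a) (hlam : a ≤ lam)
    (hc : ∀ e, 0 ≤ c e) (hH : H.Connected) (hedge : ∀ e ∈ H.edgeSet, c e ≤ lam) :
    ∃ Q : List (OrderedTree V), (∀ A ∈ Q, A.weight c ≤ lam + a) ∧
      (∀ v ∈ H.verts, ∃ A ∈ Q, v ∈ A.tour) ∧ Q.length * a ≤ max a (subWeight c H) := by
  obtain ⟨t, hmem, hnodup, hsub⟩ := exists_spanning_orderedTree hH H.verts.toFinite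
  obtain ⟨Q, hQ, hcov, hlen⟩ := t.exists_list_cover ha hlam fun e he ↦ hedge e (hsub e he)
  exact ⟨Q, hQ, fun v hv ↦ hcov v ((hmem v).2 hv),
    hlen.trans (max_le_max_left a (OrderedTree.weight_le_subWeight hc hnodup hsub))⟩

end Subgraph

lemma sum_max_eq_card_mul_add_sum {κ R : Type*} [Semiring R] [LinearOrder R] (s : Finset κ)
    (f : κ → R) (a : R) :
    ∑ i ∈ s, max a (f i) = (s.filter (f · < a)).card * a + ∑ i ∈ s with a ≤ f i, f i := by
  rw [← Finset.sum_filter_add_sum_filter_not s (f · < a)]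
  simp only [not_lt]
  rw [Finset.sum_congr rfl fun i hi ↦ max_eq_left (Finset.mem_filter.1 hi).2.le,
    Finset.sum_congr rfl fun i hi ↦ max_eq_right (Finset.mem_filter.1 hi).2,
    Finset.sum_const, nsmul_eq_mul]

theorem stmt13_general {V : Type} [Fintype V] (w : V → V → ℝ) (hzero : ∀ v, w v v = 0)
    (hnonneg : ∀ u v, 0 ≤ w u v) (hsymm : ∀ u v, w u v = w v u)
    (htri : ∀ u v x, w u x ≤ w u v + w v x) (D : Set V) (lam lamstar : ℝ)
    (hll : lamstar ≤ lam) (hpos : 0 < lamstar) (k nLT : ℕ)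
    {ι : Sort*} (opt : ι → List V) (hoptclosed : ∀ i, ∃ d ∈ D, IsClosedWalkAt (opt i) d)
    (hoptcov : ∀ v : V, ∃ i, v ∈ opt i) (hoptwt : ∀ i, walkWeight w (opt i) ≤ lamstar)
    {κ : Type*} [Fintype κ] (T : κ → (⊤ : SimpleGraph V).Subgraph)
    (hconn : ∀ i, (T i).Connected) (hcov : ∀ v : V, ∃ i, v ∈ (T i).verts)
    (hedge : ∀ i, ∀ e ∈ (T i).edgeSet, Sym2.lift ⟨w, hsymm⟩ e ≤ lam)
    (hlight : (Finset.univ.filter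
        fun i ↦ subWeight (Sym2.lift ⟨w, hsymm⟩) (T i) < lamstar).card = nLT)
    (hheavy : ∑ i with lamstar ≤ subWeight (Sym2.lift ⟨w, hsymm⟩) (T i),
        subWeight (Sym2.lift ⟨w, hsymm⟩) (T i) ≤ ((k : ℝ) - nLT) * lamstar) :
    ∃ (q' : ℕ) (_ : q' ≤ k) (tours : Fin q' → List V),
      (∀ i, ∃ d ∈ D, IsClosedWalkAt (tours i) d) ∧
      (∀ v : V, ∃ i, v ∈ tours i) ∧
      (∀ i, walkWeight w (tours i) ≤ 2 * lam + 3 * lamstar) := by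
  have hdepot (v : V) : ∃ d ∈ D, 2 * w d v ≤ lamstar := by
    obtain ⟨i, hi⟩ := hoptcov v
    obtain ⟨d, hd, hclosed⟩ := hoptclosed i
    exact ⟨d, hd, (hclosed.two_mul_le_walkWeight hzero hsymm htri hi).trans (hoptwt i)⟩
  choose depot hdepotD hdepotw using hdepot
  choose tour htour hmem hweight using fun t : OrderedTree V ↦
    t.exists_isClosedWalkAt hzero hsymm (depot t.root)
  have hc (e : Sym2 V) : 0 ≤ Sym2.lift ⟨w, hsymm⟩ e := e.ind hnonneg
  choose Q hQ hQcov hQlen using fun i ↦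
    exists_list_orderedTree_cover hpos hll hc (hconn i) (hedge i)
  have hcount : ∑ i, (Q i).length ≤ k := by
    have hsum := Finset.sum_le_sum fun i (_ : i ∈ Finset.univ) ↦ hQlen i
    rw [sum_max_eq_card_mul_add_sum, hlight, ← Finset.sum_mul] at hsum
    have : ∑ i, ((Q i).length : ℝ) ≤ k := le_of_mul_le_mul_right (by linarith) hpos
    exact_mod_cast this
  let R := Finset.univ.toList.flatMap Q
  refine ⟨R.length, by simpa [R] using hcount, fun j ↦ tour (R.get j),
    fun j ↦ ⟨_, hdepotD _, htour _⟩, fun v ↦ ?_, fun j ↦ ?_⟩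
  · obtain ⟨i, hi⟩ := hcov v
    obtain ⟨A, hA, hv⟩ := hQcov i v hi
    obtain ⟨j, rfl⟩ := List.get_of_mem (show A ∈ R from List.mem_flatMap.2 ⟨i, by simp, hA⟩)
    exact ⟨j, hmem _ v hv⟩
  · obtain ⟨i, -, hi⟩ := List.mem_flatMap.1 (R.get_mem j)
    refine (hweight (R.get j)).trans_le ?_
    linarith [hQ i _ hi, hdepotw (R.get j).root]

/-- let `λ ≥ λ* > 0` and `k ≥ 1`.  Suppose (i) there is a rooted
tour cover (with any number of tours) of maximum tour weight at most `λ*`, and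
(ii) `F` is a forest (given by its pairwise vertex-disjoint trees) covering
`V`, with all edges of weight at most `λ`, exactly `n_LT` trees of weight
`< λ*`, all other trees of weight `≥ λ*`, and total weight of the trees of
weight `≥ λ*` at most `(k − n_LT) λ*`.  Then there is a rooted tour cover with
at most `k` tours of maximum tour weight at most `4λ + λ*`. -/
theorem stmt13 {V : Type} [Fintype V] [DecidableEq V]
    (w : V → V → ℝ)
    (hzero : ∀ v, w v v = 0)
    (hnonneg : ∀ u v, 0 ≤ w u v)
    (hsymm : ∀ u v, w u v = w v u)
    (htri : ∀ u v x, w u x ≤ w u v + w v x)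
    (D : Finset V) (hD : D.Nonempty)
    (lam lamstar : ℝ) (hll : lamstar ≤ lam) (hpos : 0 < lamstar)
    (k : ℕ) (hk : 0 < k) (nLT : ℕ)
    (ι : Type) (opt : ι → List V)
    (hoptclosed : ∀ i, ∃ d ∈ D, IsClosedWalkAt (opt i) d)
    (hoptcov : ∀ v : V, ∃ i, v ∈ opt i)
    (hoptwt : ∀ i, walkWeight w (opt i) ≤ lamstar)
    (q : ℕ) (T : Fin q → (⊤ : SimpleGraph V).Subgraph)
    (hconn : ∀ i, (T i).Connected)
    (hacyc : ∀ i, (T i).coe.IsAcyclic)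
    (hdisj : ∀ i j, i ≠ j → Disjoint (T i).verts (T j).verts)
    (hcov : ∀ v : V, ∃ i, v ∈ (T i).verts)
    (hedge : ∀ i, ∀ e ∈ (T i).edgeSet, Sym2.lift ⟨w, hsymm⟩ e ≤ lam)
    (hlight : (Finset.univ.filter
        (fun i => subWeight (Sym2.lift ⟨w, hsymm⟩) (T i) < lamstar)).card
      = nLT)
    (hheavy : ∑ i ∈ Finset.univ.filter
          (fun i => lamstar ≤ subWeight (Sym2.lift ⟨w, hsymm⟩) (T i)),
        subWeight (Sym2.lift ⟨w, hsymm⟩) (T i)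
      ≤ ((k : ℝ) - (nLT : ℝ)) * lamstar) :
    ∃ (q' : ℕ) (_ : q' ≤ k) (tours : Fin q' → List V),
      (∀ i, ∃ d ∈ D, IsClosedWalkAt (tours i) d) ∧
      (∀ v : V, ∃ i, v ∈ tours i) ∧
      (∀ i, walkWeight w (tours i) ≤ 4 * lam + lamstar) := by
  obtain ⟨q', hq', tours, hclosed, hcover, hweight⟩ := stmt13_general w hzero hnonneg hsymm htri D
    lam lamstar hll hpos k nLT opt hoptclosed hoptcov hoptwt T hconn hcov hedge hlight hheavy
  exact ⟨q', hq', tours, hclosed, hcover, fun i ↦ (hweight i).trans (by linarith)⟩
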